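/- For every ν ∈ ℝ, as a → ∞ one has B_ν(a) = √(2π) · 2^{-ν} · a^{ν - 1/2} · e^{-a} · (1 + O(a⁻¹)); equivalently, there exist constants C, A > 0 such that |B_ν(a)·e^{a}·a^{1/2 - ν}·2^{ν}/√(2π) − 1| ≤ C/a for all a ≥ A. -/

import Mathlib

open Real MeasureTheory Set

theorem abs_cosh_sub_one_le (x : ℝ) : |Real.cosh x - 1| ≤ x ^ 2 * Real.exp |x| := by
  have key : ∀ y : ℝ, |Real.exp y - (1 + y)| ≤ y ^ 2 * Real.exp |y| := by
    intro y
    have h := Complex.norm_exp_sub_sum_le_norm_mul_exp (y : ℂ) 2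
    simp only [Finset.sum_range_succ, Finset.sum_range_zero] at h
    have e : Complex.exp (y : ℂ) - (0 + (y : ℂ) ^ 0 / (Nat.factorial 0 : ℂ)
        + (y : ℂ) ^ 1 / (Nat.factorial 1 : ℂ)) = ((Real.exp y - (1 + y) : ℝ) : ℂ) := by
      push_cast
      simp
    rw [e, Complex.norm_real, Complex.norm_real, Real.norm_eq_abs, Real.norm_eq_abs, sq_abs] at h
    exact h
  have h1 := abs_le.1 (key x)
  have h2 := abs_le.1 (key (-x))
  rw [abs_neg, neg_sq] at h2
  rw [Real.cosh_eq, abs_le]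
  constructor <;> linarith [h1.1, h1.2, h2.1, h2.2]

theorem sq_div_two_le_cosh_sub_one (u : ℝ) : u ^ 2 / 2 ≤ Real.cosh u - 1 := by
  have h : Real.cosh u = 2 * Real.sinh (u / 2) ^ 2 + 1 := by
    have h1 := Real.cosh_two_mul (u / 2)
    rw [mul_div_cancel₀ u two_ne_zero, Real.cosh_sq] at h1
    linarith
  have h2 : (u / 2) ^ 2 ≤ Real.sinh (u / 2) ^ 2 := by
    rw [sq_le_sq, Real.abs_sinh]
    exact Real.self_le_sinh_iff.2 (abs_nonneg _)
  rw [h]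
  nlinarith

theorem exp_mul_le (m u : ℝ) : Real.exp (m * u) ≤ Real.exp (m ^ 2) * Real.exp (u ^ 2 / 4) := by
  rw [← Real.exp_add]
  exact Real.exp_le_exp.2 (by nlinarith [sq_nonneg (m - u / 2)])

/-- Gaussian domination of the weight in the hyperbolic form of the integral. -/
theorem exp_sq_mul_exp_neg_cosh_le {a : ℝ} (ha : 1 ≤ a) (u : ℝ) :
    Real.exp (u ^ 2 / 4) * Real.exp (-(a * (Real.cosh u - 1))) ≤ Real.exp (-(a / 4) * u ^ 2) := by
  rw [← Real.exp_add]
  apply Real.exp_le_exp.2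
  have := sq_div_two_le_cosh_sub_one u
  nlinarith [mul_le_mul_of_nonneg_left this (by linarith : (0 : ℝ) ≤ a), sq_nonneg u,
    mul_nonneg (sub_nonneg.2 ha) (sq_nonneg u)]

theorem integrable_exp_mul_exp_neg_cosh {a : ℝ} (ha : 1 ≤ a) (m : ℝ) :
    Integrable (fun u : ℝ => Real.exp (m * u) * Real.exp (-(a * (Real.cosh u - 1)))) := by
  have hg : Integrable (fun u : ℝ => Real.exp (m ^ 2) * Real.exp (-(a / 4) * u ^ 2)) :=
    (integrable_exp_neg_mul_sq (by linarith : 0 < a / 4)).const_mul _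
  refine hg.mono' (by fun_prop) (Filter.Eventually.of_forall fun u => ?_)
  rw [Real.norm_of_nonneg (by positivity)]
  calc _ ≤ (Real.exp (m ^ 2) * Real.exp (u ^ 2 / 4)) * Real.exp (-(a * (Real.cosh u - 1))) := by
        gcongr; exact exp_mul_le m u
    _ ≤ _ := by
        rw [mul_assoc]; gcongr; exact exp_sq_mul_exp_neg_cosh_le ha u

theorem integral_cosh_half_mul_exp_neg_cosh (a : ℝ) :
    ∫ u : ℝ, Real.cosh (u / 2) * Real.exp (-(a * (Real.cosh u - 1))) = √(2 * π / a) := by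
  have hd : ∀ u ∈ (univ : Set ℝ), HasDerivWithinAt (fun u : ℝ => 2 * Real.sinh (u / 2))
      (Real.cosh (u / 2)) univ u := by
    intro u _
    have h := (((hasDerivAt_id' u).div_const 2).sinh.const_mul 2).hasDerivWithinAt (s := univ)
    rwa [show 2 * (Real.cosh (u / 2) * (1 / 2)) = Real.cosh (u / 2) by ring] at h
  have hinj : InjOn (fun u : ℝ => 2 * Real.sinh (u / 2)) univ := by
    intro x _ y _ h
    have h2 : Real.sinh (x / 2) = Real.sinh (y / 2) := by simpa using h
    have := Real.sinh_injective h2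
    linarith
  have himg : (fun u : ℝ => 2 * Real.sinh (u / 2)) '' univ = univ := by
    rw [image_univ, range_eq_univ]
    intro y
    obtain ⟨x, hx⟩ := Real.sinh_surjective (y / 2)
    exact ⟨2 * x, by simp only [mul_div_cancel_left₀ x (two_ne_zero (α := ℝ)), hx]; ring⟩
  have h := integral_image_eq_integral_abs_deriv_smul MeasurableSet.univ hd hinj
    (fun s : ℝ => Real.exp (-(a / 2) * s ^ 2))
  rw [himg, setIntegral_univ, setIntegral_univ, integral_gaussian] at h
  rw [show 2 * π / a = π / (a / 2) by field_simp, h]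
  congr 1
  ext u
  have h1 := Real.cosh_two_mul (u / 2)
  rw [mul_div_cancel₀ u two_ne_zero, Real.cosh_sq] at h1
  rw [abs_of_pos (Real.cosh_pos _), smul_eq_mul, h1]
  congr 2
  ring

theorem integral_Ioi_eq_integral_cosh {a : ℝ} (ha : 0 < a) (ν : ℝ) :
    ∫ t in Ioi (0 : ℝ), t ^ ν * Real.exp (-t) * Real.exp (-(a ^ 2) / (4 * t)) / t =
      (a / 2) ^ ν * Real.exp (-a) *
        ∫ u : ℝ, Real.exp (ν * u) * Real.exp (-(a * (Real.cosh u - 1))) := by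
  have hd : ∀ u ∈ (univ : Set ℝ), HasDerivWithinAt (fun u : ℝ => a / 2 * Real.exp u)
      (a / 2 * Real.exp u) univ u := fun u _ =>
    ((Real.hasDerivAt_exp u).const_mul (a / 2)).hasDerivWithinAt
  have hinj : InjOn (fun u : ℝ => a / 2 * Real.exp u) univ := by
    intro x _ y _ h
    exact Real.exp_injective (mul_left_cancel₀ (by positivity) h)
  have himg : (fun u : ℝ => a / 2 * Real.exp u) '' univ = Ioi 0 := by
    ext y
    simp only [image_univ, mem_range, mem_Ioi]
    constructor
    · rintro ⟨x, rfl⟩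
      positivity
    · intro hy
      refine ⟨Real.log (y / (a / 2)), ?_⟩
      rw [Real.exp_log (by positivity)]
      field_simp
  have h := integral_image_eq_integral_abs_deriv_smul MeasurableSet.univ hd hinj
    (fun t : ℝ => t ^ ν * Real.exp (-t) * Real.exp (-(a ^ 2) / (4 * t)) / t)
  rw [himg, setIntegral_univ] at h
  rw [h, ← integral_const_mul]
  congr 1
  ext u
  have hu := Real.exp_pos u
  have e : Real.exp (-(a / 2 * Real.exp u)) * Real.exp (-(a ^ 2) / (4 * (a / 2 * Real.exp u)))
      = Real.exp (-a) * Real.exp (-(a * (Real.cosh u - 1))) := by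
    rw [← Real.exp_add, ← Real.exp_add, Real.cosh_eq, Real.exp_neg u]
    congr 1
    field_simp
    ring
  rw [abs_of_pos (by positivity), smul_eq_mul, mul_div_cancel₀ _ (by positivity), mul_assoc, e,
    Real.mul_rpow (by positivity) hu.le, ← Real.exp_mul, mul_comm u ν]
  ring

theorem abs_integral_exp_mul_exp_neg_cosh_sub_le {a : ℝ} (ha : 1 ≤ a) (ν : ℝ) :
    |(∫ u : ℝ, Real.exp (ν * u) * Real.exp (-(a * (Real.cosh u - 1)))) - √(2 * π / a)| ≤
      16 * (ν ^ 2 * Real.exp (ν ^ 2) + 1 / 4 * Real.exp (1 / 4)) / a * √(2 * π / a) := by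
  have ha0 : 0 < a := by linarith
  set K := ν ^ 2 * Real.exp (ν ^ 2) + 1 / 4 * Real.exp (1 / 4) with hK
  have hI := integrable_exp_mul_exp_neg_cosh ha
  have hsymm : ∫ u : ℝ, Real.exp (-ν * u) * Real.exp (-(a * (Real.cosh u - 1))) =
      ∫ u : ℝ, Real.exp (ν * u) * Real.exp (-(a * (Real.cosh u - 1))) := by
    rw [← integral_neg_eq_self]
    simp
  have hC : ∀ m : ℝ, Integrable
      (fun u : ℝ => Real.cosh (m * u) * Real.exp (-(a * (Real.cosh u - 1)))) := by
    intro m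
    refine (((hI m).add (hI (-m))).const_mul (1 / 2)).congr
      (Filter.Eventually.of_forall fun u => ?_)
    simp only [Pi.add_apply, Real.cosh_eq (m * u), neg_mul]
    ring
  have hcosh : ∫ u : ℝ, Real.exp (ν * u) * Real.exp (-(a * (Real.cosh u - 1))) =
      ∫ u : ℝ, Real.cosh (ν * u) * Real.exp (-(a * (Real.cosh u - 1))) := by
    have h : ∫ u : ℝ, Real.cosh (ν * u) * Real.exp (-(a * (Real.cosh u - 1))) =
        ∫ u : ℝ, 1 / 2 * (Real.exp (ν * u) * Real.exp (-(a * (Real.cosh u - 1))) +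
          Real.exp (-ν * u) * Real.exp (-(a * (Real.cosh u - 1)))) := by
      congr 1
      ext u
      rw [Real.cosh_eq (ν * u), neg_mul]
      ring
    rw [h, integral_const_mul, integral_add (hI _) (hI _), hsymm]
    ring
  have hC2 : Integrable
      (fun u : ℝ => Real.cosh (u / 2) * Real.exp (-(a * (Real.cosh u - 1)))) := by
    refine (hC (1 / 2)).congr (Filter.Eventually.of_forall fun u => ?_)
    simp only [one_div_mul_eq_div]
  rw [hcosh, ← integral_cosh_half_mul_exp_neg_cosh, ← integral_sub (hC ν) hC2,
    integral_cosh_half_mul_exp_neg_cosh]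
  have hg : Integrable (fun u : ℝ => K * (8 / a) * Real.exp (-(a / 8) * u ^ 2)) :=
    (integrable_exp_neg_mul_sq (by linarith : 0 < a / 8)).const_mul _
  have hsq : √(π / (a / 8)) = 2 * √(2 * π / a) := by
    rw [show π / (a / 8) = 2 ^ 2 * (2 * π / a) by field_simp; norm_num,
      Real.sqrt_mul (by positivity), Real.sqrt_sq (by norm_num)]
  have hval : ∫ u : ℝ, K * (8 / a) * Real.exp (-(a / 8) * u ^ 2) =
      16 * K / a * √(2 * π / a) := by
    rw [integral_const_mul, integral_gaussian, hsq]
    ring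
  rw [← hval, ← Real.norm_eq_abs]
  refine norm_integral_le_of_norm_le hg (Filter.Eventually.of_forall fun u => ?_)
  have hexp : ∀ m : ℝ, Real.exp |m * u| ≤ Real.exp (m ^ 2) * Real.exp (u ^ 2 / 4) := by
    intro m
    have := exp_mul_le |m| |u|
    rwa [sq_abs, sq_abs, ← abs_mul] at this
  have hb : ∀ m : ℝ, |Real.cosh (m * u) - 1| ≤
      m ^ 2 * Real.exp (m ^ 2) * (u ^ 2 * Real.exp (u ^ 2 / 4)) := by
    intro m
    calc _ ≤ (m * u) ^ 2 * Real.exp |m * u| := abs_cosh_sub_one_le _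
      _ ≤ (m * u) ^ 2 * (Real.exp (m ^ 2) * Real.exp (u ^ 2 / 4)) := by gcongr; exact hexp m
      _ = _ := by ring
  have hdiff : |Real.cosh (ν * u) - Real.cosh (u / 2)| ≤
      K * (u ^ 2 * Real.exp (u ^ 2 / 4)) := by
    have h1 := abs_le.1 (hb ν)
    have h2 := abs_le.1 (hb (1 / 2))
    rw [show (1 / 2 : ℝ) * u = u / 2 by ring, show ((1 / 2 : ℝ)) ^ 2 = 1 / 4 by norm_num] at h2
    rw [hK, abs_le]
    constructor <;> linarith [h1.1, h1.2, h2.1, h2.2]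
  have hK0 : 0 ≤ K := by positivity
  have hx : u ^ 2 ≤ 8 / a * Real.exp (a / 8 * u ^ 2) := by
    have := Real.add_one_le_exp (a / 8 * u ^ 2)
    calc u ^ 2 = 8 / a * (a / 8 * u ^ 2) := by field_simp
      _ ≤ _ := by gcongr; linarith
  rw [← sub_mul, norm_mul, Real.norm_eq_abs, Real.norm_of_nonneg (Real.exp_pos _).le]
  calc _ ≤ K * (u ^ 2 * Real.exp (u ^ 2 / 4)) * Real.exp (-(a * (Real.cosh u - 1))) := by gcongr
    _ = K * (u ^ 2 * (Real.exp (u ^ 2 / 4) * Real.exp (-(a * (Real.cosh u - 1))))) := by ring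
    _ ≤ K * ((8 / a * Real.exp (a / 8 * u ^ 2)) * Real.exp (-(a / 4) * u ^ 2)) := by
        gcongr
        exact exp_sq_mul_exp_neg_cosh_le ha u
    _ = _ := by
        rw [mul_assoc, ← Real.exp_add, mul_assoc]
        congr 3
        ring

theorem stmt3 (ν : ℝ) :
    ∃ C A : ℝ, 0 < C ∧ 0 < A ∧ ∀ a : ℝ, A ≤ a →
      |(∫ t in Set.Ioi (0:ℝ), t ^ ν * Real.exp (-t) * Real.exp (-(a ^ 2) / (4 * t)) / t) *
          Real.exp a * a ^ (1 / 2 - ν) * (2:ℝ) ^ ν / Real.sqrt (2 * π) - 1| ≤ C / a := by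
  refine ⟨16 * (ν ^ 2 * Real.exp (ν ^ 2) + 1 / 4 * Real.exp (1 / 4)), 1, by positivity, one_pos,
    fun a ha => ?_⟩
  have ha0 : 0 < a := by linarith
  have hS : 0 < √(2 * π / a) := by positivity
  have hbound := abs_integral_exp_mul_exp_neg_cosh_sub_le ha ν
  rw [integral_Ioi_eq_integral_cosh ha0]
  set I := ∫ u : ℝ, Real.exp (ν * u) * Real.exp (-(a * (Real.cosh u - 1)))
  have e : (a / 2) ^ ν * Real.exp (-a) * I * Real.exp a * a ^ (1 / 2 - ν) * (2 : ℝ) ^ ν /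
      √(2 * π) - 1 = (I - √(2 * π / a)) / √(2 * π / a) := by
    have h2 : (0 : ℝ) < 2 ^ ν := by positivity
    have haν : 0 < a ^ ν := by positivity
    have hsa : 0 < √a := by positivity
    have hsp : 0 < √(2 * π) := by positivity
    rw [sub_div, div_self hS.ne', Real.div_rpow ha0.le two_pos.le, Real.rpow_sub ha0,
      ← Real.sqrt_eq_rpow, Real.exp_neg, Real.sqrt_div (by positivity)]
    field_simp
  rw [e, abs_div, abs_of_pos hS, div_le_iff₀ hS]
  exact hbound
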